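/- Let A, B, B', C, C' be complex-valued multiplicative characters of a finite field F_q with q elements, let x ∈ F_q with x ≠ 0, y ∈ F_q, and t ∈ F_q with t ≠ 0 and t ≠ 1. Then (1/(q-1))·Σ_θ {Aθ choose θ}·F₂(Aθ;B,B';C,C';x,y)·θ(t) = Ā(1-t)·F₂(A;B,B';C,C'; x/(1-t), y/(1-t)) - Ā(-t)·C̄'(y)·(B̄'C')(1-y)·₂F₁(A,B;C | -x/t) - Ā(-t)·( {B choose C}·{B' choose C'}·ε(y) - F₂(ε;B,B';C,C';x,y) ) + (BC)(-1)·Ā(-x)·C̄'(y)·(B̄'C')(1-y)·₂F₁(A, AC̄; AB̄ | -t/x), where the sum on the left runs over all multiplicative characters θ of F_q. -/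

import Mathlib

open Finset

noncomputable instance {F : Type*} [Field F] [Fintype F] : Fintype (MulChar F ℂ) :=
  Fintype.ofFinite _

/-- Finite-field binomial coefficient `{A choose B} = B(-1) · J(A, B̄)`,
where `J(χ,λ) = ∑_u χ(u)·λ(1-u)` is the Jacobi sum. -/
noncomputable def binom {F : Type*} [Field F] [Fintype F] (A B : MulChar F ℂ) : ℂ :=
  B (-1) * ∑ u : F, A u * B⁻¹ (1 - u)

/-- Finite-field Gauss hypergeometric series
`₂F₁(A,B;C|x) = ε(x)·(BC)(-1)·∑_y B(y)·(B̄C)(1-y)·Ā(1-xy)`. -/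
noncomputable def gauss2F1 {F : Type*} [Field F] [Fintype F]
    (A B C : MulChar F ℂ) (x : F) : ℂ :=
  (1 : MulChar F ℂ) x * (B * C) (-1) *
    ∑ y : F, B y * (B⁻¹ * C) (1 - y) * A⁻¹ (1 - x * y)

/-- Finite-field `₃F₂` hypergeometric series. -/
noncomputable def hyper3F2 {F : Type*} [Field F] [Fintype F]
    (A₀ A₁ A₂ B₁ B₂ : MulChar F ℂ) (x : F) : ℂ :=
  ((Fintype.card F : ℂ) - 1)⁻¹ *
    ∑ χ : MulChar F ℂ,
      binom (A₀ * χ) χ * binom (A₁ * χ) (B₁ * χ) * binom (A₂ * χ) (B₂ * χ) * χ x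

/-- Finite-field Appell series
`F₂(A;B,B';C,C';x,y) = ε(xy)·(BB'CC')(-1)·∑_{u,v} B(u)B'(v)(B̄C)(1-u)(B̄'C')(1-v)·Ā(1-ux-vy)`. -/
noncomputable def appellF2 {F : Type*} [Field F] [Fintype F]
    (A B B' C C' : MulChar F ℂ) (x y : F) : ℂ :=
  (1 : MulChar F ℂ) (x * y) * (B * B' * C * C') (-1) *
    ∑ u : F, ∑ v : F,
      B u * B' v * (B⁻¹ * C) (1 - u) * (B'⁻¹ * C') (1 - v) * A⁻¹ (1 - u * x - v * y)

open scoped Classical in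
/-- `δ(x) = 1` if `x = 0`, and `0` otherwise. -/
noncomputable def deltaF {F : Type*} [Field F] (x : F) : ℂ :=
  if x = 0 then 1 else 0

open scoped Classical in
/-- `δ(χ) = 1` if `χ = ε` (the trivial character), and `0` otherwise. -/
noncomputable def deltaChar {F : Type*} [Field F] [Fintype F] (χ : MulChar F ℂ) : ℂ :=
  if χ = 1 then 1 else 0

section aux
variable {F : Type*} [Field F] [Fintype F]

lemma aux_orth (a : F) (ha : a ≠ 1) : ∑ θ : MulChar F ℂ, θ a = 0 := by
  classical
  by_cases ha0 : a = 0
  · subst ha0; exact Finset.sum_eq_zero fun θ _ => MulChar.map_zero θ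
  obtain ⟨χ, hχ⟩ := MulChar.exists_apply_ne_one_of_hasEnoughRootsOfUnity F ℂ ha
  refine eq_zero_of_mul_eq_self_left hχ ?_
  rw [Finset.mul_sum]
  exact Fintype.sum_bijective _ (Group.mulLeft_bijective χ) _ _ (fun θ => by simp)

lemma aux_card : ∑ θ : MulChar F ℂ, θ (1 : F) = (Fintype.card F : ℂ) - 1 := by
  classical
  simp only [map_one, sum_const, nsmul_eq_mul, mul_one, card_univ]
  rw [← Nat.card_eq_fintype_card, MulChar.card_eq_card_units_of_hasEnoughRootsOfUnity F ℂ,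
    Nat.card_eq_fintype_card, Fintype.card_units, Nat.cast_sub Fintype.card_pos, Nat.cast_one]

lemma aux_q : (Fintype.card F : ℂ) - 1 ≠ 0 := by
  have : 1 < Fintype.card F := Fintype.one_lt_card
  rw [sub_ne_zero]
  exact_mod_cast this.ne'

lemma aux_key (A : MulChar F ℂ) (w t : F) (ht : t ≠ 0) :
    ((Fintype.card F : ℂ) - 1)⁻¹ *
      ∑ θ : MulChar F ℂ, binom (A * θ) θ * (A * θ)⁻¹ w * θ t =
    A⁻¹ (w - t) - A⁻¹ (-t) * (1 - (1 : MulChar F ℂ) w) := by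
  classical
  by_cases hw : w = 0
  · subst hw; simp [MulChar.map_zero]
  have hq := aux_q (F := F)
  rw [MulChar.one_apply (isUnit_iff_ne_zero.2 hw), sub_self, mul_zero, sub_zero,
    inv_mul_eq_iff_eq_mul₀ hq]
  have h1 : ∀ θ : MulChar F ℂ, binom (A * θ) θ * (A * θ)⁻¹ w * θ t =
      ∑ s : F, A (s * w⁻¹) * θ (-s * (1 - s)⁻¹ * w⁻¹ * t) := by
    intro θ
    unfold binom
    rw [mul_assoc, mul_assoc, Finset.sum_mul, Finset.mul_sum]
    refine Finset.sum_congr rfl fun s _ => ?_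
    rw [MulChar.inv_apply', MulChar.inv_apply', neg_eq_neg_one_mul s]
    simp only [MulChar.mul_apply, map_mul]
    ring
  simp_rw [h1]
  rw [Finset.sum_comm]
  simp_rw [← Finset.mul_sum]
  have hcond : ∀ s : F, -s * (1 - s)⁻¹ * w⁻¹ * t = 1 → s * (w - t) = w := by
    intro s hs
    have h : (1 - s) ≠ 0 := by
      intro h; simp [h] at hs
    field_simp at hs
    linear_combination hs
  by_cases hwt : w - t = 0
  · rw [hwt, MulChar.map_zero, mul_zero]
    refine Finset.sum_eq_zero fun s _ => ?_
    rw [aux_orth, mul_zero]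
    intro hs
    have := hcond s hs
    rw [hwt, mul_zero] at this
    exact hw this.symm
  · rw [Finset.sum_eq_single (w / (w - t))]
    · have e1 : w / (w - t) * w⁻¹ = (w - t)⁻¹ := by field_simp
      have e2 : 1 - w / (w - t) = -t / (w - t) := by field_simp; ring
      have e3 : -(w / (w - t)) * (1 - w / (w - t))⁻¹ * w⁻¹ * t = 1 := by
        rw [e2]; field_simp
      rw [e1, e3, aux_card, MulChar.inv_apply', mul_comm]
    · intro s _ hs
      rw [aux_orth, mul_zero]
      intro h
      exact hs (by rw [eq_div_iff hwt]; exact hcond s h)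
    · simp

lemma aux_binom (B C : MulChar F ℂ) :
    binom B C = (B * C) (-1) * ∑ u : F, B u * (B⁻¹ * C) (1 - u) := by
  classical
  unfold binom
  rw [MulChar.mul_apply, mul_comm (B (-1)), mul_assoc]
  congr 1
  rw [Finset.mul_sum, ← Finset.sum_erase (a := (1 : F)) _ (by simp [MulChar.map_zero]),
    ← Finset.sum_erase (a := (1 : F)) (f := fun u => B (-1) * (B u * (B⁻¹ * C) (1 - u))) _
      (by simp [MulChar.map_zero])]
  have hinv : ∀ u : F, u ≠ 1 → u / (u - 1) / (u / (u - 1) - 1) = u := by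
    intro u hu
    have h : u - 1 ≠ 0 := sub_ne_zero.2 hu
    have e : u / (u - 1) - 1 = (u - 1)⁻¹ := by field_simp; ring
    rw [e]; field_simp
  have hne : ∀ u : F, u ≠ 1 → u / (u - 1) ≠ 1 := by
    intro u hu
    have h : u - 1 ≠ 0 := sub_ne_zero.2 hu
    rw [Ne, div_eq_one_iff_eq h]
    intro h'
    have : (1 : F) = 0 := by linear_combination h'
    exact one_ne_zero this
  refine Finset.sum_bij' (fun u _ => u / (u - 1)) (fun u _ => u / (u - 1)) ?_ ?_ ?_ ?_ ?_
  · intro u hu; simpa using hne u (by simpa using hu)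
  · intro u hu; simpa using hne u (by simpa using hu)
  · intro u hu; exact hinv u (by simpa using hu)
  · intro u hu; exact hinv u (by simpa using hu)
  · intro u hu
    have hu : u ≠ 1 := by simpa using hu
    have h : u - 1 ≠ 0 := sub_ne_zero.2 hu
    have h' : 1 - u ≠ 0 := sub_ne_zero.2 hu.symm
    have e : 1 - u / (u - 1) = (1 - u)⁻¹ := by
      rw [← neg_sub 1 u] ; field_simp; ring
    rw [e, MulChar.mul_apply, MulChar.inv_apply', MulChar.inv_apply', inv_inv, ← mul_assoc,
      ← mul_assoc, ← map_mul, ← map_mul]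
    congr 2
    rw [← neg_sub 1 u]; field_simp

lemma aux_gauss (A B C : MulChar F ℂ) (x t : F) (hx : x ≠ 0) (ht : t ≠ 0) :
    A⁻¹ (-t) * gauss2F1 A B C (-x / t) =
      (B * C) (-1) * A⁻¹ (-x) * gauss2F1 A (A * C⁻¹) (A * B⁻¹) (-t / x) := by
  classical
  have s1 : ∀ χ : MulChar F ℂ, χ (-1) * χ (-1) = 1 := by
    intro χ; rw [← map_mul]; simp
  unfold gauss2F1
  rw [MulChar.one_apply (isUnit_iff_ne_zero.2 (div_ne_zero (neg_ne_zero.2 hx) ht)),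
    MulChar.one_apply (isUnit_iff_ne_zero.2 (div_ne_zero (neg_ne_zero.2 ht) hx)), one_mul, one_mul,
    Finset.mul_sum, Finset.mul_sum, Finset.mul_sum, Finset.mul_sum]
  refine Fintype.sum_bijective (fun y : F => y⁻¹) inv_involutive.bijective _ _ ?_
  intro y
  by_cases hy : y = 0
  · subst hy; simp [MulChar.map_zero]
  have c1 : A⁻¹ (-t) * A⁻¹ (1 - -x / t * y) = A⁻¹ (-(t + x * y)) := by
    rw [← map_mul]; congr 1; field_simp; ring
  have c2 : A⁻¹ (-x) * A⁻¹ (1 - -t / x * y⁻¹) * A y⁻¹ = A⁻¹ (-(t + x * y)) := by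
    rw [← MulChar.inv_apply', ← map_mul, ← map_mul]; congr 1; field_simp; ring
  have c3 : (A * C⁻¹)⁻¹ * (A * B⁻¹) = B⁻¹ * C := by
    rw [mul_inv, inv_inv, mul_mul_mul_comm, inv_mul_cancel, one_mul, mul_comm]
  have c4 : (B⁻¹ * C) (1 - y⁻¹) = B (-1) * C (-1) * (B⁻¹ * C) (1 - y) * (B y * C y⁻¹) := by
    have e : 1 - y⁻¹ = -1 * (1 - y) * y⁻¹ := by field_simp; ring
    rw [e, map_mul, map_mul, MulChar.mul_apply, MulChar.mul_apply _ _ y⁻¹, MulChar.inv_apply',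
      MulChar.inv_apply' B y⁻¹, inv_inv, inv_neg, inv_one]
  have c5 : C y * C y⁻¹ = 1 := by
    rw [← map_mul, mul_inv_cancel₀ hy, map_one]
  have c6 : (A * C⁻¹ * (A * B⁻¹)) (-1) = B (-1) * C (-1) := by
    simp only [MulChar.mul_apply, MulChar.inv_apply', inv_neg, inv_one]
    linear_combination (B (-1) * C (-1)) * s1 A
  rw [c3, c4, c6, MulChar.mul_apply A, MulChar.inv_apply' C, inv_inv, MulChar.mul_apply B C]
  calc _ = B (-1) * C (-1) * (B y * (B⁻¹ * C) (1 - y)) *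
        (A⁻¹ (-t) * A⁻¹ (1 - -x / t * y)) := by ring
    _ = B (-1) * C (-1) * (B y * (B⁻¹ * C) (1 - y)) *
        (A⁻¹ (-x) * A⁻¹ (1 - -t / x * y⁻¹) * A y⁻¹) *
        (B (-1) * B (-1)) * (C (-1) * C (-1)) * (C y * C y⁻¹) := by
      rw [c1, c2, s1, s1, c5, mul_one, mul_one, mul_one]
    _ = _ := by ring

end aux

/-- a generating function for F₂ in the parameter `A`. -/
theorem appellF2_generating_A {F : Type*} [Field F] [Fintype F]
    (A B B' C C' : MulChar F ℂ) (x y t : F)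
    (hx : x ≠ 0) (ht0 : t ≠ 0) (ht1 : t ≠ 1) :
    ((Fintype.card F : ℂ) - 1)⁻¹ *
        ∑ θ : MulChar F ℂ, binom (A * θ) θ * appellF2 (A * θ) B B' C C' x y * θ t =
      A⁻¹ (1 - t) * appellF2 A B B' C C' (x / (1 - t)) (y / (1 - t)) -
      A⁻¹ (-t) * C'⁻¹ y * (B'⁻¹ * C') (1 - y) * gauss2F1 A B C (-x / t) -
      A⁻¹ (-t) *
        (binom B C * binom B' C' * (1 : MulChar F ℂ) y - appellF2 1 B B' C C' x y) +
      (B * C) (-1) * A⁻¹ (-x) * C'⁻¹ y * (B'⁻¹ * C') (1 - y) *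
        gauss2F1 A (A * C⁻¹) (A * B⁻¹) (-t / x) := by
  classical
  have hg := aux_gauss A B C x t hx ht0
  have ht : 1 - t ≠ 0 := sub_ne_zero.2 ht1.symm
  have hgg : A⁻¹ (-t) * C'⁻¹ y * (B'⁻¹ * C') (1 - y) * gauss2F1 A B C (-x / t) =
      (B * C) (-1) * A⁻¹ (-x) * C'⁻¹ y * (B'⁻¹ * C') (1 - y) *
        gauss2F1 A (A * C⁻¹) (A * B⁻¹) (-t / x) := by
    linear_combination (C'⁻¹ y * (B'⁻¹ * C') (1 - y)) * hg
  rw [hgg]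
  -- the last two terms cancel; expand the rest over a common double sum
  set k : ℂ := (1 : MulChar F ℂ) (x * y) * (B * B' * C * C') (-1) with hk
  set G : F → F → ℂ := fun u v => B u * B' v * (B⁻¹ * C) (1 - u) * (B'⁻¹ * C') (1 - v) with hG
  have hL : ((Fintype.card F : ℂ) - 1)⁻¹ *
        ∑ θ : MulChar F ℂ, binom (A * θ) θ * appellF2 (A * θ) B B' C C' x y * θ t =
      ∑ u : F, ∑ v : F, k * G u v * (((Fintype.card F : ℂ) - 1)⁻¹ *
        ∑ θ : MulChar F ℂ, binom (A * θ) θ * (A * θ)⁻¹ (1 - u * x - v * y) * θ t) := by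
    simp only [appellF2, Finset.mul_sum, Finset.sum_mul]
    rw [Finset.sum_comm]
    refine Finset.sum_congr rfl fun u _ => ?_
    rw [Finset.sum_comm]
    refine Finset.sum_congr rfl fun v _ => Finset.sum_congr rfl fun θ _ => ?_
    simp only [hk, hG]
    ring
  have h1 : A⁻¹ (1 - t) * appellF2 A B B' C C' (x / (1 - t)) (y / (1 - t)) =
      ∑ u : F, ∑ v : F, k * G u v * A⁻¹ (1 - u * x - v * y - t) := by
    have e1 : (1 : MulChar F ℂ) (x / (1 - t) * (y / (1 - t))) = (1 : MulChar F ℂ) (x * y) := by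
      rw [div_mul_div_comm, div_eq_mul_inv, map_mul,
        MulChar.one_apply (isUnit_iff_ne_zero.2 (inv_ne_zero (mul_ne_zero ht ht))), mul_one]
    unfold appellF2
    rw [e1]
    simp only [Finset.mul_sum]
    refine Finset.sum_congr rfl fun u _ => Finset.sum_congr rfl fun v _ => ?_
    have e2 : 1 - u * x - v * y - t = (1 - t) * (1 - u * (x / (1 - t)) - v * (y / (1 - t))) := by
      field_simp; ring
    rw [e2, map_mul A⁻¹]
    simp only [hk, hG]
    ring
  have h2 : binom B C * binom B' C' * (1 : MulChar F ℂ) y = ∑ u : F, ∑ v : F, k * G u v := by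
    have e1 : (1 : MulChar F ℂ) (x * y) = (1 : MulChar F ℂ) y := by
      rw [map_mul, MulChar.one_apply (isUnit_iff_ne_zero.2 hx), one_mul]
    rw [aux_binom, aux_binom, hk, e1, mul_mul_mul_comm, Finset.sum_mul_sum]
    simp only [Finset.mul_sum, Finset.sum_mul]
    refine Finset.sum_congr rfl fun u _ => Finset.sum_congr rfl fun v _ => ?_
    simp only [hG, MulChar.mul_apply]
    ring
  have h3 : appellF2 1 B B' C C' x y =
      ∑ u : F, ∑ v : F, k * G u v * (1 : MulChar F ℂ) (1 - u * x - v * y) := by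
    unfold appellF2
    rw [inv_one]
    simp only [Finset.mul_sum]
    refine Finset.sum_congr rfl fun u _ => Finset.sum_congr rfl fun v _ => ?_
    simp only [hk, hG]
    ring
  have hm : ((Fintype.card F : ℂ) - 1)⁻¹ *
        ∑ θ : MulChar F ℂ, binom (A * θ) θ * appellF2 (A * θ) B B' C C' x y * θ t =
      A⁻¹ (1 - t) * appellF2 A B B' C C' (x / (1 - t)) (y / (1 - t)) -
      A⁻¹ (-t) *
        (binom B C * binom B' C' * (1 : MulChar F ℂ) y - appellF2 1 B B' C C' x y) := by
    rw [hL, h1, h2, h3]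
    simp only [aux_key A _ t ht0, ← Finset.sum_sub_distrib, Finset.mul_sum]
    refine Finset.sum_congr rfl fun u _ => Finset.sum_congr rfl fun v _ => ?_
    ring
  rw [hm]
  ring
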